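/- Let k(T) = 63(3T² − 3T + 1)(T² + T + 1)(T² − 3T + 3) ∈ ℚ[T]. Then for all but finitely many rational numbers t, the elliptic curve W_{k(t)} : y² = x³ − 432k(t)² over ℚ has Mordell–Weil rank at least 2; equivalently, the set of t ∈ ℚ for which the ℤ-module W_{k(t)}(ℚ) has rank < 2 is finite. -/

import Mathlib

open WeierstrassCurve

/-- The polynomial `k(T) = 63(3T² − 3T + 1)(T² + T + 1)(T² − 3T + 3)` evaluated at `t ∈ ℚ`. -/
def k7 (t : ℚ) : ℚ :=
  63 * (3 * t ^ 2 - 3 * t + 1) * (t ^ 2 + t + 1) * (t ^ 2 - 3 * t + 3)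

/-- The elliptic curve `W_{k(t)} : y² = x³ - 432k(t)²` over `ℚ`. -/
def W7 (t : ℚ) : Affine ℚ :=
  { a₁ := 0, a₂ := 0, a₃ := 0, a₄ := 0, a₆ := -432 * k7 t ^ 2 }

/-!
All curves `y² = x³ + b` are twists of each other, so the height of the twist-invariant function
`x³ / 4b` changes under doubling by a factor of `4` up to an error that does not depend on `b`.
Hence it differs from the canonical height, a positive semidefinite quadratic form on the group of
points, by at most a constant uniform in `b`.

The map `σ t = 1 / (1 - t)` of order three satisfies `k(t) = (1 - t)⁶ k(σ t)`, so `W_{k(t)}` is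
isomorphic to `W_{k(σ t)}` and to `W_{k(σ² t)}`. Transporting one parametric point from the latter
two curves to `W_{k(t)}` gives, up to sign, points `P`, `Q` and `P + Q`, all of height
`4 h(t) + O(1)`. For large `h(t)` the canonical heights of these three points are thus nearly equal,
which makes the Gram determinant of `P` and `Q` positive. The remaining `t` are finitely many by
Northcott's theorem.
-/

section Parallelogram

variable {G k : Type*} [AddCommGroup G] [Field k] [LinearOrder k] [IsStrictOrderedRing k]
  {f : G → k}

lemma polar_add_left_of_parallelogram (hf : ∀ x y, f (x + y) + f (x - y) = 2 * (f x + f y))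
    (x y z : G) :
    QuadraticMap.polar f (x + y) z = QuadraticMap.polar f x z + QuadraticMap.polar f y z := by
  have h₁ := hf (x + z) y
  have h₂ := hf x (z - y)
  have h₃ := hf (x + y) z
  have h₄ := hf z y
  rw [show x + z + y = x + y + z by abel, add_sub_assoc] at h₁
  rw [show x - (z - y) = x + y - z by abel] at h₂
  rw [add_comm z y] at h₄
  simp only [QuadraticMap.polar]
  linarith

lemma polar_zsmul_left_of_parallelogram (hf : ∀ x y, f (x + y) + f (x - y) = 2 * (f x + f y))
    (n : ℤ) (x y : G) : QuadraticMap.polar f (n • x) y = n • QuadraticMap.polar f x y :=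
  map_zsmul (AddMonoidHom.mk' (QuadraticMap.polar f · y)
    fun a b ↦ polar_add_left_of_parallelogram hf a b y) n x

lemma polar_self_of_parallelogram (hf : ∀ x y, f (x + y) + f (x - y) = 2 * (f x + f y)) (x : G) :
    QuadraticMap.polar f x x = 2 * f x := by
  have h₀ := hf 0 0
  have hx := hf x x
  rw [add_zero, sub_zero] at h₀
  rw [sub_self] at hx
  rw [QuadraticMap.polar]
  linarith

/-- A function satisfying the parallelogram law, as a quadratic map over `ℤ`. -/
def quadraticMapOfParallelogram (f : G → k)
    (hf : ∀ x y, f (x + y) + f (x - y) = 2 * (f x + f y)) : QuadraticMap ℤ G k :=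
  .ofPolar f
    (fun n x ↦ by
      have hpolar : QuadraticMap.polar f (n • x) (n • x) = n • n • QuadraticMap.polar f x x := by
        rw [polar_zsmul_left_of_parallelogram hf, QuadraticMap.polar_comm,
          polar_zsmul_left_of_parallelogram hf]
      simp only [polar_self_of_parallelogram hf, zsmul_eq_mul] at hpolar ⊢
      push_cast
      linarith)
    (polar_add_left_of_parallelogram hf)
    (polar_zsmul_left_of_parallelogram hf)

lemma linearIndependent_pair_of_sq_polar_lt (q : QuadraticMap ℤ G k) {x y : G}
    (h : QuadraticMap.polar q x y ^ 2 < 4 * q x * q y) : LinearIndependent ℤ ![x, y] := by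
  refine LinearIndependent.pair_iff.mpr fun m n hmn ↦ ?_
  have hzero : m ^ 2 * q x + n ^ 2 * q y + m * n * QuadraticMap.polar q x y = 0 := by
    have := QuadraticMap.map_add q (m • x) (n • y)
    rw [hmn, map_zero, q.map_smul, q.map_smul, q.polar_smul_left, q.polar_smul_right] at this
    simp only [zsmul_eq_mul, Int.cast_mul] at this
    linear_combination -this
  have hsq : (2 * m * q x + n * QuadraticMap.polar q x y) ^ 2 +
      n ^ 2 * (4 * q x * q y - QuadraticMap.polar q x y ^ 2) = 0 := by
    linear_combination 4 * q x * hzero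
  have hn : n = 0 := by
    by_contra hn
    have : (0 : k) < n ^ 2 := by positivity
    nlinarith [sq_nonneg (2 * m * q x + n * QuadraticMap.polar q x y)]
  subst hn
  have hx : q x ≠ 0 := by
    rintro hx
    rw [hx, mul_zero, zero_mul] at h
    exact h.not_ge (sq_nonneg _)
  exact ⟨by simpa [hx] using hzero, rfl⟩

end Parallelogram

section CanonicalHeight

open Filter Topology

variable {G : Type*} [AddCommGroup G] {h : G → ℝ} {C D : ℝ}

/-- Tate's canonical height `lim h(2ⁿx) / 4ⁿ` attached to an approximately quadratic function `h`,
with a junk value where the limit does not exist. -/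
noncomputable def canonicalHeight (h : G → ℝ) (x : G) : ℝ :=
  limUnder atTop fun n : ℕ ↦ h (2 ^ n • x) / 4 ^ n

lemma dist_div_four_pow_le (hC : ∀ x, |h (2 • x) - 4 * h x| ≤ C) (x : G) (n : ℕ) :
    dist (h (2 ^ n • x) / 4 ^ n) (h (2 ^ (n + 1) • x) / 4 ^ (n + 1)) ≤ C / 4 * (1 / 4) ^ n := by
  have hpos : (0 : ℝ) < 4 ^ (n + 1) := by positivity
  calc dist (h (2 ^ n • x) / 4 ^ n) (h (2 ^ (n + 1) • x) / 4 ^ (n + 1))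
      = |h (2 • 2 ^ n • x) - 4 * h (2 ^ n • x)| / 4 ^ (n + 1) := by
        rw [dist_comm, Real.dist_eq, pow_succ' 2, mul_smul, ← abs_of_pos hpos, ← abs_div,
          abs_of_pos hpos, pow_succ' (4 : ℝ)]
        congr 1
        field_simp
    _ ≤ C / 4 ^ (n + 1) := by gcongr; exact hC _
    _ = C / 4 * (1 / 4) ^ n := by rw [pow_succ', one_div, inv_pow]; field_simp

lemma tendsto_canonicalHeight (hC : ∀ x, |h (2 • x) - 4 * h x| ≤ C) (x : G) :
    Tendsto (fun n : ℕ ↦ h (2 ^ n • x) / 4 ^ n) atTop (𝓝 (canonicalHeight h x)) :=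
  (cauchySeq_of_le_geometric (1 / 4) (C / 4) (by norm_num)
    (dist_div_four_pow_le hC x)).tendsto_limUnder

lemma abs_canonicalHeight_sub_le (hC : ∀ x, |h (2 • x) - 4 * h x| ≤ C) (x : G) :
    |canonicalHeight h x - h x| ≤ C / 3 := by
  have := dist_le_of_le_geometric_of_tendsto₀ (1 / 4) (C / 4) (by norm_num)
    (dist_div_four_pow_le hC x) (tendsto_canonicalHeight hC x)
  rw [dist_comm, Real.dist_eq, pow_zero, one_smul, pow_zero, div_one] at this
  exact this.trans_eq (by ring)

theorem canonicalHeight_add_add_canonicalHeight_sub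
    (hC : ∀ x, |h (2 • x) - 4 * h x| ≤ C)
    (hD : ∀ x y, |h (x + y) + h (x - y) - 2 * (h x + h y)| ≤ D) (x y : G) :
    canonicalHeight h (x + y) + canonicalHeight h (x - y) =
      2 * (canonicalHeight h x + canonicalHeight h y) := by
  have hlim := tendsto_canonicalHeight hC
  refine sub_eq_zero.mp (tendsto_nhds_unique
    (((hlim (x + y)).add (hlim (x - y))).sub (((hlim x).add (hlim y)).const_mul 2)) ?_)
  have hbound : Tendsto (fun n : ℕ ↦ D / 4 ^ n) atTop (𝓝 0) :=
    tendsto_const_nhds.div_atTop (tendsto_pow_atTop_atTop_of_one_lt (by norm_num))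
  refine squeeze_zero_norm (fun n ↦ ?_) hbound
  have hpos : (0 : ℝ) < 4 ^ n := by positivity
  rw [smul_add, smul_sub, ← add_div, ← add_div, ← mul_div_assoc, ← sub_div, norm_div,
    Real.norm_eq_abs, Real.norm_of_nonneg hpos.le]
  gcongr
  exact hD _ _

/-- The polar form of the canonical height at `(x, y)` is close to `-A`, and `(-A)² < 4A²`. -/
theorem two_le_rank_of_abs_sub_le {A e : ℝ} (hC : ∀ x, |h (2 • x) - 4 * h x| ≤ C)
    (hD : ∀ x y, |h (x + y) + h (x - y) - 2 * (h x + h y)| ≤ D) {x y : G}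
    (hx : |h x - A| ≤ e) (hy : |h y - A| ≤ e) (hxy : |h (x + y) - A| ≤ e)
    (hA : 5 * (e + C / 3) < A) : 2 ≤ Module.rank ℤ G := by
  let q := quadraticMapOfParallelogram (canonicalHeight h)
    (canonicalHeight_add_add_canonicalHeight_sub hC hD)
  have hq {z : G} (hz : |h z - A| ≤ e) : |q z - A| ≤ e + C / 3 := by
    have hz' : |q z - h z| ≤ C / 3 := abs_canonicalHeight_sub_le hC z
    linarith [abs_sub_le (q z) (h z) A]
  have hqx := abs_le.mp (hq hx)
  have hqy := abs_le.mp (hq hy)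
  have hqxy := abs_le.mp (hq hxy)
  have hpolar : |QuadraticMap.polar q x y| ≤ A + 3 * (e + C / 3) := by
    rw [QuadraticMap.polar, abs_le]
    constructor <;> linarith
  have hli : LinearIndependent ℤ ![x, y] := linearIndependent_pair_of_sq_polar_lt q <| calc
    QuadraticMap.polar q x y ^ 2
      ≤ (A + 3 * (e + C / 3)) ^ 2 := sq_le_sq' (abs_le.mp hpolar).1 (abs_le.mp hpolar).2
    _ < 4 * (A - (e + C / 3)) * (A - (e + C / 3)) := by nlinarith
    _ ≤ 4 * q x * q y := by gcongr <;> linarith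
  simpa using hli.cardinal_lift_le_rank

end CanonicalHeight

section AdditionMap

lemma eval_addSubMap {R : Type*} [CommRing R] (W : WeierstrassCurve R) (s t u : R) :
    (fun i ↦ (addSubMap W i).eval ![s, t, u]) =
      ![s ^ 2 - W.b₄ * s * u - W.b₆ * t * u - W.b₈ * u ^ 2,
        2 * t * s + W.b₂ * s * u + W.b₄ * t * u + W.b₆ * u ^ 2, t ^ 2 - 4 * s * u] := by
  ext i
  fin_cases i <;> simp [addSubMap]

variable {F : Type*} [Field F] [DecidableEq F] {W : Affine F}

lemma exists_eval_addSubMap_eq_smul_sym2x_add_self {x y : F} (h : W.Nonsingular x y) :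
    ∃ c : F, c ≠ 0 ∧ (fun i ↦ (addSubMap W i).eval ![x * x, x + x, 1]) =
      c • (Affine.Point.some x y h + .some x y h).sym2x 0 := by
  obtain ⟨heq, hns⟩ := (W.nonsingular_iff' x y).mp h
  rw [W.equation_iff] at heq
  simp only [eval_addSubMap, b₂, b₄, b₆, b₈]
  by_cases hy : y = W.negY x y
  · have hψ : 2 * y + W.a₁ * x + W.a₃ = 0 := by
      rw [Affine.negY] at hy
      linear_combination hy
    refine ⟨(W.a₁ * y - (3 * x ^ 2 + 2 * W.a₂ * x + W.a₄)) ^ 2,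
      pow_ne_zero 2 (hns.resolve_right (not_not_intro hψ)), ?_⟩
    rw [Affine.Point.add_self_of_Y_eq hy, Affine.Point.sym2x_zero_zero, Matrix.smul_vec3]
    refine Matrix.vec3_eq ?_ ?_ ?_ <;> simp only [smul_eq_mul] <;> grind
  · have hψ : y - W.negY x y ≠ 0 := sub_ne_zero.mpr hy
    refine ⟨(y - W.negY x y) ^ 2, pow_ne_zero 2 hψ, ?_⟩
    rw [Affine.Point.add_self_of_Y_ne hy, Affine.Point.sym2x_some_zero, Affine.addX,
      Affine.slope_of_Y_ne rfl hy, Matrix.smul_vec3]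
    refine Matrix.vec3_eq ?_ ?_ ?_ <;> simp only [smul_eq_mul]
    · field_simp
      rw [Affine.negY]
      linear_combination (W.a₁ ^ 2 + 4 * W.a₂ + 8 * x) * heq
    · rw [Affine.negY]
      linear_combination (-4) * heq
    · ring

lemma exists_eval_addSubMap_eq_smul_sym2x_of_X_ne {x₁ y₁ x₂ y₂ : F} (h₁ : W.Nonsingular x₁ y₁)
    (h₂ : W.Nonsingular x₂ y₂) (hx : x₁ ≠ x₂) :
    ∃ c : F, c ≠ 0 ∧ (fun i ↦ (addSubMap W i).eval ![x₁ * x₂, x₁ + x₂, 1]) =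
      c • (Affine.Point.some x₁ y₁ h₁ + .some x₂ y₂ h₂).sym2x
        (.some x₁ y₁ h₁ - .some x₂ y₂ h₂) := by
  have heq₁ := (W.equation_iff x₁ y₁).mp h₁.1
  have heq₂ := (W.equation_iff x₂ y₂).mp h₂.1
  have hx' : x₁ - x₂ ≠ 0 := sub_ne_zero.mpr hx
  refine ⟨(x₁ - x₂) ^ 2, pow_ne_zero 2 hx', ?_⟩
  simp only [sub_eq_add_neg (Affine.Point.some x₁ y₁ h₁), Affine.Point.neg_some,
    Affine.Point.add_of_X_ne hx, Affine.Point.sym2x_some_some, eval_addSubMap,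
    Affine.slope_of_X_ne hx, Affine.addX, Affine.negY, b₂, b₄, b₆, b₈, Matrix.smul_vec3,
    smul_eq_mul]
  refine Matrix.vec3_eq ?_ ?_ ?_
  · field_simp
    grind
  · field_simp
    grind
  · ring

theorem exists_eval_addSubMap_sym2x (P Q : W.Point) : ∃ c : F, c ≠ 0 ∧
    (fun i ↦ (addSubMap W i).eval (P.sym2x Q)) = c • (P + Q).sym2x (P - Q) := by
  match P, Q with
  | 0, 0 => exact ⟨1, one_ne_zero, by simp [eval_addSubMap]⟩
  | 0, .some x y h => exact ⟨1, one_ne_zero, by simp [eval_addSubMap, sq, two_mul]⟩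
  | .some x y h, 0 => exact ⟨1, one_ne_zero, by simp [eval_addSubMap, sq, two_mul]⟩
  | .some x₁ y₁ h₁, .some x₂ y₂ h₂ =>
    rw [Affine.Point.sym2x_some_some]
    by_cases hx : x₁ = x₂
    · subst hx
      rcases Affine.Point.X_eq_iff (h₁ := h₁) (h₂ := h₂) |>.mp rfl with heq | hneg
      · rw [← heq, sub_self]
        exact exists_eval_addSubMap_eq_smul_sym2x_add_self h₁
      · rw [← neg_eq_iff_eq_neg.mpr hneg, sub_neg_eq_add, add_neg_cancel, Affine.Point.sym2x_comm]
        exact exists_eval_addSubMap_eq_smul_sym2x_add_self h₁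
    · exact exists_eval_addSubMap_eq_smul_sym2x_of_X_ne h₁ h₂ hx

end AdditionMap

section NaiveHeight

open Height

theorem exists_abs_logHeight_sym2x_sub_le (K : Type*) [Field K] [AdmissibleAbsValues K] :
    ∃ C, ∀ {W : Affine K} (P Q : W.Point),
      |logHeight (P.sym2x Q) - (logHeight P.xRep + logHeight Q.xRep)| ≤ C := by
  obtain ⟨C, hC⟩ := abs_logHeight_sym2_sub_le K
  refine ⟨C, fun P Q ↦ ?_⟩
  have eta (v : Fin 2 → K) : ![v 0, v 1] = v := FinVec.etaExpand_eq v
  have := hC (a := P.xRep 0) (b := P.xRep 1) (c := Q.xRep 0) (d := Q.xRep 1)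
  rw [eta, eta] at this
  exact this P.xRep_ne_zero Q.xRep_ne_zero

variable {K : Type*} [Field K] [AdmissibleAbsValues K] [DecidableEq K] (W : Affine K)

theorem exists_abs_logHeight_xRep_add_add_logHeight_xRep_sub_le [W.IsElliptic] :
    ∃ C, ∀ P Q : W.Point, |logHeight (P + Q).xRep + logHeight (P - Q).xRep -
      2 * (logHeight P.xRep + logHeight Q.xRep)| ≤ C := by
  obtain ⟨C₁, h₁⟩ := abs_logHeight_addSubMap_sub_two_mul_logHeight_le W
  obtain ⟨C₂, h₂⟩ := exists_abs_logHeight_sym2x_sub_le K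
  refine ⟨C₁ + 3 * C₂, fun P Q ↦ ?_⟩
  obtain ⟨c, hc, heq⟩ := exists_eval_addSubMap_sym2x P Q
  have hmap := h₁ (P.sym2x Q)
  rw [heq, logHeight_smul_eq_logHeight _ hc] at hmap
  have hPQ := h₂ P Q
  have hadd := h₂ (P + Q) (P - Q)
  rw [abs_le] at *
  constructor <;> linarith

end NaiveHeight

section Heights

open Height MvPolynomial

variable {K : Type*} [Field K] [AdmissibleAbsValues K]

theorem abs_logHeight₁_mul_sub_le {a : K} (ha : a ≠ 0) (x : K) :
    |logHeight₁ (a * x) - logHeight₁ x| ≤ logHeight₁ a := by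
  have hle := logHeight₁_mul_le a x
  have hge := logHeight₁_mul_le a⁻¹ (a * x)
  rw [inv_mul_cancel_left₀ ha, logHeight₁_inv] at hge
  rw [abs_le]
  constructor <;> linarith

theorem abs_logHeight₁_add_sub_le (a x : K) :
    |logHeight₁ (a + x) - logHeight₁ x| ≤ totalWeight K * Real.log 2 + logHeight₁ a := by
  have hle := logHeight₁_add_le a x
  have hge := logHeight₁_sub_le (a + x) a
  rw [add_sub_cancel_left] at hge
  rw [abs_le]
  constructor <;> linarith

lemma exists_abs_logHeight₁_affine_sub_le {a : K} (ha : a ≠ 0) (b : K) :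
    ∃ C, ∀ x, |logHeight₁ (b + a * x) - logHeight₁ x| ≤ C := by
  refine ⟨totalWeight K * Real.log 2 + logHeight₁ b + logHeight₁ a, fun x ↦ ?_⟩
  linarith [abs_sub_le (logHeight₁ (b + a * x)) (logHeight₁ (a * x)) (logHeight₁ x),
    abs_logHeight₁_add_sub_le b (a * x), abs_logHeight₁_mul_sub_le ha x]

/-- The Nullstellensatz certificate `q` witnesses that `p` defines a morphism of projective
spaces. -/
theorem exists_abs_logHeight_eval_sub_le {ι ι' : Type*} [Finite ι] [Fintype ι'] {M N : ℕ}
    {p : ι' → MvPolynomial ι K} {q : ι × ι' → MvPolynomial ι K}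
    (hp : ∀ j, (p j).IsHomogeneous N) (hq : ∀ a, (q a).IsHomogeneous M)
    (hpq : ∀ x i, ∑ j, (q (i, j)).eval x * (p j).eval x = x i ^ (M + N)) :
    ∃ C, ∀ x, |logHeight (fun j ↦ (p j).eval x) - N * logHeight x| ≤ C := by
  obtain ⟨C₁, h₁⟩ := logHeight_eval_le' hp
  obtain ⟨C₂, h₂⟩ := logHeight_eval_ge' (N := N) hq
  refine ⟨max C₁ (-C₂), fun x ↦ abs_le.mpr ⟨?_, ?_⟩⟩
  · linarith [h₂ p (hpq x), le_max_right C₁ (-C₂)]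
  · linarith [h₁ x, le_max_left C₁ (-C₂)]

end Heights

section BinaryForm

open MvPolynomial

variable {R : Type*} [CommRing R] {n : ℕ}

/-- The binary form `a₀Xⁿ + a₁Xⁿ⁻¹Y + ⋯ + aₙYⁿ`. -/
noncomputable def binaryForm (a : Fin (n + 1) → R) : MvPolynomial (Fin 2) R :=
  ∑ i, C (a i) * (X 0 ^ (n - i : ℕ) * X 1 ^ (i : ℕ))

lemma isHomogeneous_binaryForm (a : Fin (n + 1) → R) : (binaryForm a).IsHomogeneous n := by
  refine .sum _ _ _ fun i _ ↦ .C_mul ?_ _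
  have := (isHomogeneous_X_pow (R := R) (0 : Fin 2) (n - i)).mul
    (isHomogeneous_X_pow (R := R) (1 : Fin 2) i)
  rwa [Nat.sub_add_cancel i.is_le] at this

lemma eval_binaryForm (a : Fin (n + 1) → R) (x : Fin 2 → R) :
    (binaryForm a).eval x = ∑ i, a i * (x 0 ^ (n - i : ℕ) * x 1 ^ (i : ℕ)) := by
  simp only [binaryForm, map_sum, map_mul, map_pow, eval_C, eval_X]

lemma eval_binaryForm_three (a : Fin 4 → R) (x : Fin 2 → R) :
    (binaryForm (n := 3) a).eval x =
      a 0 * x 0 ^ 3 + a 1 * (x 0 ^ 2 * x 1) + a 2 * (x 0 * x 1 ^ 2) + a 3 * x 1 ^ 3 := by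
  simp [eval_binaryForm, Fin.sum_univ_succ, add_assoc]

end BinaryForm

section MordellCurve

open Height WeierstrassCurve

/-- The curve `y² = x³ + b`. -/
def mordellCurve {R : Type*} [CommRing R] (b : R) : Affine R :=
  { a₁ := 0, a₂ := 0, a₃ := 0, a₄ := 0, a₆ := b }

lemma mordellCurve_equation_iff {R : Type*} [CommRing R] {b x y : R} :
    (mordellCurve b).Equation x y ↔ y ^ 2 = x ^ 3 + b := by
  simp [Affine.equation_iff, mordellCurve]

variable {K : Type*} [Field K] {b : K}

lemma isElliptic_mordellCurve [CharZero K] (hb : b ≠ 0) : (mordellCurve b).IsElliptic := by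
  refine ⟨IsUnit.mk0 _ ?_⟩
  simp [mordellCurve, Δ, b₂, b₄, b₆, b₈, hb]

lemma mordellCurve_nonsingular [CharZero K] (hb : b ≠ 0) {x y : K} (h : y ^ 2 = x ^ 3 + b) :
    (mordellCurve b).Nonsingular x y :=
  have := isElliptic_mordellCurve hb
  Affine.equation_iff_nonsingular.mp (mordellCurve_equation_iff.mpr h)

lemma eval_addSubMap_mordellCurve (s t u : K) :
    (fun i ↦ (addSubMap (mordellCurve b) i).eval ![s, t, u]) =
      ![s ^ 2 - 4 * b * t * u, 2 * t * s + 4 * b * u ^ 2, t ^ 2 - 4 * s * u] := by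
  simp [eval_addSubMap, mordellCurve, b₂, b₄, b₆, b₈]

lemma exists_smul_xRep_two_nsmul [DecidableEq K] (P : (mordellCurve b).Point) :
    ∃ c : K, c ≠ 0 ∧ c • (2 • P).xRep =
      ![P.xRep 0 * (P.xRep 0 ^ 3 - 8 * b * P.xRep 1 ^ 3),
        4 * P.xRep 1 * (P.xRep 0 ^ 3 + b * P.xRep 1 ^ 3)] := by
  obtain ⟨c, hc, heq⟩ := exists_eval_addSubMap_sym2x P P
  refine ⟨c, hc, ?_⟩
  rw [← two_nsmul, sub_self, Affine.Point.sym2x, Affine.Point.sym2x, eval_addSubMap_mordellCurve,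
    Affine.Point.xRep_zero] at heq
  ext i
  fin_cases i <;> simp only [Fin.zero_eta, Fin.mk_one, Pi.smul_apply, smul_eq_mul, Matrix.cons_val]
  · have hnum := congrFun heq 0
    simp only [Pi.smul_apply, smul_eq_mul, Matrix.cons_val] at hnum
    linear_combination -hnum
  · have hden := congrFun heq 1
    simp only [Pi.smul_apply, smul_eq_mul, Matrix.cons_val] at hden
    linear_combination -hden

variable [AdmissibleAbsValues K]

/-- The height of the invariant `x³ / 4b` of a point `(x, y)` on `y² = x³ + b`. All these curves
are twists of each other, and `x³ / 4b` is the quotient map by their automorphism group `μ₆`. -/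
noncomputable def mordellHeight (b : K) (P : (mordellCurve b).Point) : ℝ :=
  logHeight ![P.xRep 0 ^ 3, 4 * b * P.xRep 1 ^ 3]

lemma mordellHeight_some {x y : K} (h : (mordellCurve b).Nonsingular x y) :
    mordellHeight b (.some x y h) = logHeight₁ (x ^ 3 / (4 * b)) := by
  simp [mordellHeight, logHeight₁_div_eq_logHeight]

lemma mordellHeight_some_add_some [DecidableEq K] {x₁ y₁ x₂ y₂ : K}
    (h₁ : (mordellCurve b).Nonsingular x₁ y₁) (h₂ : (mordellCurve b).Nonsingular x₂ y₂)
    (hx : x₁ ≠ x₂) :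
    mordellHeight b (.some x₁ y₁ h₁ + .some x₂ y₂ h₂) =
      logHeight₁ ((((y₁ - y₂) / (x₁ - x₂)) ^ 2 - x₁ - x₂) ^ 3 / (4 * b)) := by
  rw [Affine.Point.add_of_X_ne hx, mordellHeight_some, Affine.addX, Affine.slope_of_X_ne hx]
  simp [mordellCurve]

section Duplication

open MvPolynomial

/-- The duplication map `U ↦ U (U - 2)³ / (4U + 1)³` on the invariant `U = x³ / 4b`, in homogeneous
coordinates. -/
noncomputable def duplicationForm (K : Type*) [CommRing K] : Fin 2 → MvPolynomial (Fin 2) K :=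
  ![X 0 * (X 0 - C 2 * X 1) ^ 3, X 1 * (C 4 * X 0 + X 1) ^ 3]

lemma isHomogeneous_duplicationForm (K : Type*) [CommRing K] (i : Fin 2) :
    (duplicationForm K i).IsHomogeneous 4 := by
  have hX (j : Fin 2) : (X j : MvPolynomial (Fin 2) K).IsHomogeneous 1 := isHomogeneous_X ..
  fin_cases i
  · exact (hX 0).mul (((hX 0).sub ((hX 1).C_mul 2)).pow 3)
  · exact (hX 1).mul ((((hX 0).C_mul 4).add (hX 1)).pow 3)

lemma eval_duplicationForm {K : Type*} [CommRing K] (x : Fin 2 → K) :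
    (fun j ↦ (duplicationForm K j).eval x) =
      ![x 0 * (x 0 - 2 * x 1) ^ 3, x 1 * (4 * x 0 + x 1) ^ 3] := by
  ext j
  fin_cases j <;> simp [duplicationForm]

/-- Bézout coefficients expressing `3⁹ U⁷` and `3⁹ V⁷` through the two duplication forms, whose
resultant is a power of `3`. -/
noncomputable def duplicationCoeff (K : Type*) [Field K] :
    Fin 2 × Fin 2 → MvPolynomial (Fin 2) K := fun ij ↦ C (3 ^ 9)⁻¹ *
  binaryForm (![![![19683, 14674, 3656, 304], ![1616, -3584, 2432, 0]],
    ![![0, 155648, 114688, 25856], ![-2432, 14624, -29348, 19683]]] ij.1 ij.2)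

lemma isHomogeneous_duplicationCoeff (K : Type*) [Field K] (ij : Fin 2 × Fin 2) :
    (duplicationCoeff K ij).IsHomogeneous 3 :=
  (isHomogeneous_binaryForm _).C_mul _

lemma sum_duplicationCoeff_mul_duplicationForm {K : Type*} [Field K] [CharZero K] (x : Fin 2 → K)
    (i : Fin 2) :
    ∑ j, (duplicationCoeff K (i, j)).eval x * (duplicationForm K j).eval x = x i ^ (3 + 4) := by
  have h₀ := congrFun (eval_duplicationForm x) 0
  have h₁ := congrFun (eval_duplicationForm x) 1
  simp only [Matrix.cons_val] at h₀ h₁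
  fin_cases i <;>
  · simp only [Fin.sum_univ_two, h₀, h₁, duplicationCoeff, map_mul, eval_C,
      eval_binaryForm_three, Matrix.cons_val, Fin.zero_eta, Fin.mk_one]
    field_simp
    ring

end Duplication

theorem exists_abs_mordellHeight_two_nsmul_sub_le (K : Type*) [Field K] [CharZero K]
    [AdmissibleAbsValues K] [DecidableEq K] : ∃ C, ∀ (b : K) (P : (mordellCurve b).Point),
      |mordellHeight b (2 • P) - 4 * mordellHeight b P| ≤ C := by
  obtain ⟨C, hC⟩ := exists_abs_logHeight_eval_sub_le (isHomogeneous_duplicationForm K)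
    (isHomogeneous_duplicationCoeff K) sum_duplicationCoeff_mul_duplicationForm
  refine ⟨C, fun b P ↦ ?_⟩
  obtain ⟨c, hc, hdouble⟩ := exists_smul_xRep_two_nsmul P
  have h₀ : c * (2 • P).xRep 0 = _ := congrFun hdouble 0
  have h₁ : c * (2 • P).xRep 1 = _ := congrFun hdouble 1
  have heval : (fun j ↦ (duplicationForm K j).eval ![P.xRep 0 ^ 3, 4 * b * P.xRep 1 ^ 3]) =
      c ^ 3 • ![(2 • P).xRep 0 ^ 3, 4 * b * (2 • P).xRep 1 ^ 3] := by
    rw [Matrix.smul_vec2, smul_eq_mul, smul_eq_mul, mul_left_comm, ← mul_pow, ← mul_pow, h₀, h₁,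
      eval_duplicationForm]
    refine Matrix.vec2_eq ?_ ?_ <;> simp only [Matrix.cons_val] <;> ring
  have := hC ![P.xRep 0 ^ 3, 4 * b * P.xRep 1 ^ 3]
  rw [heval, logHeight_smul_eq_logHeight _ (pow_ne_zero 3 hc)] at this
  exact_mod_cast this

lemma abs_mordellHeight_sub_three_mul_le [CharZero K] (hb : b ≠ 0) (P : (mordellCurve b).Point) :
    |mordellHeight b P - 3 * logHeight P.xRep| ≤ logHeight₁ (4 * b) := by
  have hscale := abs_logHeight₁_mul_sub_le (a := (4 * b)⁻¹) (by simpa)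
    (P.xRep 0 ^ 3 / P.xRep 1 ^ 3)
  rw [inv_mul_eq_div, div_div, mul_comm _ (4 * b), logHeight₁_inv, ← div_pow (P.xRep 0),
    logHeight₁_pow, logHeight₁_div_eq_logHeight, logHeight₁_div_eq_logHeight] at hscale
  rw [show ![P.xRep 0, P.xRep 1] = P.xRep from FinVec.etaExpand_eq _] at hscale
  exact_mod_cast hscale

theorem exists_abs_mordellHeight_add_add_sub_le [CharZero K] [DecidableEq K] (hb : b ≠ 0) :
    ∃ C, ∀ P Q : (mordellCurve b).Point,
      |mordellHeight b (P + Q) + mordellHeight b (P - Q) -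
        2 * (mordellHeight b P + mordellHeight b Q)| ≤ C := by
  have := isElliptic_mordellCurve hb
  obtain ⟨C, hC⟩ := exists_abs_logHeight_xRep_add_add_logHeight_xRep_sub_le (mordellCurve b)
  refine ⟨3 * C + 6 * logHeight₁ (4 * b), fun P Q ↦ ?_⟩
  have hcmp := abs_mordellHeight_sub_three_mul_le hb
  have hlaw := abs_le.mp (hC P Q)
  have hP := abs_le.mp (hcmp P)
  have hQ := abs_le.mp (hcmp Q)
  have hadd := abs_le.mp (hcmp (P + Q))
  have hsub := abs_le.mp (hcmp (P - Q))
  rw [abs_le]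
  constructor <;> linarith

end MordellCurve

section TwistFamily

open Height WeierstrassCurve

variable {K : Type*} [Field K] {c s t : K}

/-- The polynomial `k` of the twist family, over an arbitrary field. -/
def twistParameter (t : K) : K :=
  63 * (3 * t ^ 2 - 3 * t + 1) * (t ^ 2 + t + 1) * (t ^ 2 - 3 * t + 3)

/-- The curve `y² = x³ - 432 k(t)²`, a Weierstrass model of `X³ + Y³ = k(t)`. -/
abbrev twistCurve (t : K) : Affine K :=
  mordellCurve (-432 * twistParameter t ^ 2)

/-- The `x`-coordinate `4 k(t) / (3 t² - 3 t + 1)` of a parametric point on `twistCurve t`, with the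
denominator cancelled. -/
def twistX (t : K) : K :=
  252 * (t ^ 2 + t + 1) * (t ^ 2 - 3 * t + 3)

/-- The `y`-coordinate of the parametric point with `x`-coordinate `twistX t`, again with the
denominator `3 t² - 3 t + 1` cancelled. -/
def twistY (t : K) : K :=
  756 * (t ^ 2 + t + 1) * (t ^ 2 - 3 * t + 3) * (9 + t - t ^ 2)

/-- The invariant `x³ / 4b` of the parametric point on `twistCurve t`, whose height is the
`mordellHeight` of that point. It is junk, namely `0`, where `twistParameter t = 0`. -/
def twistInvariant (t : K) : K :=
  twistX t ^ 3 / (4 * (-432 * twistParameter t ^ 2))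

lemma twistParameter_eq_mul_twistParameter_inv_one_sub (ht : t ≠ 1) :
    twistParameter t = (1 - t) ^ 6 * twistParameter (1 - t)⁻¹ := by
  have : 1 - t ≠ 0 := sub_ne_zero.mpr ht.symm
  simp only [twistParameter]
  field_simp
  ring

lemma twistParameter_eq_mul_twistParameter_one_sub_inv (ht : t ≠ 0) :
    twistParameter t = t ^ 6 * twistParameter (1 - t⁻¹) := by
  simp only [twistParameter]
  field_simp
  ring

lemma mul_twistX_inv_one_sub (ht : t ≠ 1) :
    (1 - t) ^ 4 * twistX (1 - t)⁻¹ = 252 * (t ^ 2 - 3 * t + 3) * (3 * t ^ 2 - 3 * t + 1) := by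
  have : 1 - t ≠ 0 := sub_ne_zero.mpr ht.symm
  simp only [twistX]
  field_simp
  ring

lemma mul_twistY_inv_one_sub (ht : t ≠ 1) :
    (1 - t) ^ 6 * twistY (1 - t)⁻¹ = 756 * (t ^ 2 - 3 * t + 3) * (3 * t ^ 2 - 3 * t + 1) *
      (9 * (1 - t) ^ 2 - t) := by
  have : 1 - t ≠ 0 := sub_ne_zero.mpr ht.symm
  simp only [twistY]
  field_simp
  ring

lemma mul_twistX_one_sub_inv (ht : t ≠ 0) :
    t ^ 4 * twistX (1 - t⁻¹) = 252 * (3 * t ^ 2 - 3 * t + 1) * (t ^ 2 + t + 1) := by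
  simp only [twistX]
  field_simp
  ring

lemma twistY_sq (t : K) : twistY t ^ 2 = twistX t ^ 3 + -432 * twistParameter t ^ 2 := by
  rw [twistX, twistY, twistParameter]
  ring

lemma mul_twistY_sq (h : twistParameter t = c ^ 6 * twistParameter s) :
    (c ^ 6 * twistY s) ^ 2 = (c ^ 4 * twistX s) ^ 3 + -432 * twistParameter t ^ 2 := by
  rw [h]
  linear_combination c ^ 12 * twistY_sq s

lemma mul_twistX_pow_div (hc : c ≠ 0) (h : twistParameter t = c ^ 6 * twistParameter s) :
    (c ^ 4 * twistX s) ^ 3 / (4 * (-432 * twistParameter t ^ 2)) = twistInvariant s := by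
  rw [h, twistInvariant]
  field_simp

lemma twistX_ne_mul_twistX_inv_one_sub [CharZero K] (hk : twistParameter t ≠ 0) (ht₀ : t ≠ 0)
    (ht₁ : t ≠ 1) (ht₂ : t ≠ 2) : twistX t ≠ (1 - t) ^ 4 * twistX (1 - t)⁻¹ := by
  have hfactor : t ^ 2 - 3 * t + 3 ≠ 0 := right_ne_zero_of_mul hk
  rw [mul_twistX_inv_one_sub ht₁, ← sub_ne_zero, twistX,
    show 252 * (t ^ 2 + t + 1) * (t ^ 2 - 3 * t + 3) -
        252 * (t ^ 2 - 3 * t + 3) * (3 * t ^ 2 - 3 * t + 1) =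
      -504 * (t ^ 2 - 3 * t + 3) * t * (t - 2) by ring]
  simp [hfactor, ht₀, sub_ne_zero.mpr ht₂]

lemma secant_eq_mul_twistX_one_sub_inv [CharZero K] (hk : twistParameter t ≠ 0) (ht₀ : t ≠ 0)
    (ht₁ : t ≠ 1) (ht₂ : t ≠ 2) :
    ((twistY t - (1 - t) ^ 6 * twistY (1 - t)⁻¹) /
        (twistX t - (1 - t) ^ 4 * twistX (1 - t)⁻¹)) ^ 2 -
      twistX t - (1 - t) ^ 4 * twistX (1 - t)⁻¹ = t ^ 4 * twistX (1 - t⁻¹) := by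
  have hx := sub_ne_zero.mpr (twistX_ne_mul_twistX_inv_one_sub hk ht₀ ht₁ ht₂)
  have hslope : (twistY t - (1 - t) ^ 6 * twistY (1 - t)⁻¹) /
      (twistX t - (1 - t) ^ 4 * twistX (1 - t)⁻¹) = 42 * (t ^ 2 - t + 1) := by
    rw [div_eq_iff hx, mul_twistX_inv_one_sub ht₁, mul_twistY_inv_one_sub ht₁, twistX, twistY]
    ring
  rw [hslope, mul_twistX_inv_one_sub ht₁, mul_twistX_one_sub_inv ht₀, twistX]
  ring

lemma twistY_div_twistParameter [CharZero K] (hk : twistParameter t ≠ 0) :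
    twistY t / twistParameter t = 4 * (-1 + 28 * (3 * t ^ 2 - 3 * t + 1)⁻¹) := by
  have hfactor : 3 * t ^ 2 - 3 * t + 1 ≠ 0 :=
    right_ne_zero_of_mul (left_ne_zero_of_mul (left_ne_zero_of_mul hk))
  have hinv : (3 * t ^ 2 - 3 * t + 1)⁻¹ * (3 * t ^ 2 - 3 * t + 1) = 1 := inv_mul_cancel₀ hfactor
  rw [div_eq_iff hk, twistParameter, twistY]
  linear_combination -7056 * (t ^ 2 + t + 1) * (t ^ 2 - 3 * t + 3) * hinv

lemma twistInvariant_eq [CharZero K] (hk : twistParameter t ≠ 0) :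
    twistInvariant t = -1 / 4 + -1 / 108 * (-1 + 28 * (3 * t ^ 2 - 3 * t + 1)⁻¹) ^ 2 := by
  have hcurve := twistY_sq t
  calc twistInvariant t = -1 / 4 + -1 / 1728 * (twistY t / twistParameter t) ^ 2 := by
        rw [twistInvariant]
        field_simp
        linear_combination 1728 * hcurve
    _ = _ := by
        rw [twistY_div_twistParameter hk]
        ring

lemma finite_setOf_twistParameter_eq_zero [CharZero K] :
    {t : K | twistParameter t = 0}.Finite := by
  open Polynomial in
  let p : K[X] := 63 * (3 * X ^ 2 - 3 * X + 1) * (X ^ 2 + X + 1) * (X ^ 2 - 3 * X + 3)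
  have heval (t : K) : p.eval t = twistParameter t := by simp [p, twistParameter]
  have hp : p ≠ 0 := fun h ↦ by
    have := heval 0
    norm_num [h, twistParameter] at this
  refine (Polynomial.finite_setOfPred_isRoot hp).subset fun t ht ↦ ?_
  exact (heval t).trans ht

theorem exists_abs_logHeight₁_twistInvariant_sub_le (K : Type*) [Field K] [CharZero K]
    [AdmissibleAbsValues K] : ∃ C, ∀ t : K, twistParameter t ≠ 0 →
      |logHeight₁ (twistInvariant t) - 4 * logHeight₁ t| ≤ C := by
  obtain ⟨C₁, h₁⟩ := exists_abs_logHeight₁_affine_sub_le (one_ne_zero (α := K)) (-1 / 2)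
  obtain ⟨C₂, h₂⟩ := exists_abs_logHeight₁_affine_sub_le (three_ne_zero (α := K)) (1 / 4)
  obtain ⟨C₃, h₃⟩ := exists_abs_logHeight₁_affine_sub_le (a := (28 : K)) (by norm_num) (-1)
  obtain ⟨C₄, h₄⟩ :=
    exists_abs_logHeight₁_affine_sub_le (a := (-1 / 108 : K)) (by norm_num) (-1 / 4)
  refine ⟨4 * C₁ + 2 * C₂ + 2 * C₃ + C₄, fun t hk ↦ ?_⟩
  have hsquare : 3 * t ^ 2 - 3 * t + 1 = 1 / 4 + 3 * (-1 / 2 + 1 * t) ^ 2 := by ring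
  rw [twistInvariant_eq hk, hsquare]
  have hline := abs_le.mp (h₁ t)
  have hquadratic := abs_le.mp (h₂ ((-1 / 2 + 1 * t) ^ 2))
  have hinverse := abs_le.mp (h₃ (1 / 4 + 3 * (-1 / 2 + 1 * t) ^ 2)⁻¹)
  have hquartic := abs_le.mp
    (h₄ ((-1 + 28 * (1 / 4 + 3 * (-1 / 2 + 1 * t) ^ 2)⁻¹) ^ 2))
  rw [logHeight₁_pow, Nat.cast_two] at hquadratic hquartic
  rw [logHeight₁_inv] at hinverse
  rw [abs_le]
  constructor <;> linarith

variable [CharZero K] [AdmissibleAbsValues K] [DecidableEq K]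

lemma exists_mordellHeight_eq_logHeight₁_twistInvariant (hk : twistParameter t ≠ 0) (ht₀ : t ≠ 0)
    (ht₁ : t ≠ 1) (ht₂ : t ≠ 2) :
    ∃ P Q : (twistCurve t).Point,
      mordellHeight _ P = logHeight₁ (twistInvariant t) ∧
      mordellHeight _ Q = logHeight₁ (twistInvariant (1 - t)⁻¹) ∧
      mordellHeight _ (P + Q) = logHeight₁ (twistInvariant (1 - t⁻¹)) := by
  have hb : -432 * twistParameter t ^ 2 ≠ 0 := by simp [hk]
  have hσ := twistParameter_eq_mul_twistParameter_inv_one_sub ht₁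
  have hP := mordellCurve_nonsingular hb (twistY_sq t)
  have hQ := mordellCurve_nonsingular hb (mul_twistY_sq hσ)
  refine ⟨.some _ _ hP, .some _ _ hQ, mordellHeight_some hP, ?_, ?_⟩
  · rw [mordellHeight_some, mul_twistX_pow_div (sub_ne_zero.mpr ht₁.symm) hσ]
  · rw [mordellHeight_some_add_some hP hQ (twistX_ne_mul_twistX_inv_one_sub hk ht₀ ht₁ ht₂),
      secant_eq_mul_twistX_one_sub_inv hk ht₀ ht₁ ht₂,
      mul_twistX_pow_div ht₀ (twistParameter_eq_mul_twistParameter_one_sub_inv ht₀)]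

theorem exists_abs_mordellHeight_sub_four_mul_le (K : Type*) [Field K] [CharZero K]
    [AdmissibleAbsValues K] [DecidableEq K] :
    ∃ C, ∀ t : K, twistParameter t ≠ 0 → t ≠ 0 → t ≠ 1 → t ≠ 2 → ∃ P Q : (twistCurve t).Point,
      |mordellHeight _ P - 4 * logHeight₁ t| ≤ C ∧ |mordellHeight _ Q - 4 * logHeight₁ t| ≤ C ∧
        |mordellHeight _ (P + Q) - 4 * logHeight₁ t| ≤ C := by
  obtain ⟨C₁, h₁⟩ := exists_abs_logHeight₁_twistInvariant_sub_le K
  obtain ⟨C₂, h₂⟩ := exists_abs_logHeight₁_affine_sub_le (neg_ne_zero.mpr (one_ne_zero (α := K))) 1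
  refine ⟨C₁ + 4 * C₂, fun t hk ht₀ ht₁ ht₂ ↦ ?_⟩
  obtain ⟨P, Q, hP, hQ, hPQ⟩ := exists_mordellHeight_eq_logHeight₁_twistInvariant hk ht₀ ht₁ ht₂
  have hσ := abs_le.mp (h₂ t)
  have hσσ := abs_le.mp (h₂ t⁻¹)
  rw [neg_one_mul, ← sub_eq_add_neg] at hσ hσσ
  rw [logHeight₁_inv] at hσσ
  have hkσ : twistParameter (1 - t)⁻¹ ≠ 0 := right_ne_zero_of_mul
    (twistParameter_eq_mul_twistParameter_inv_one_sub ht₁ ▸ hk)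
  have hkσσ : twistParameter (1 - t⁻¹) ≠ 0 := right_ne_zero_of_mul
    (twistParameter_eq_mul_twistParameter_one_sub_inv ht₀ ▸ hk)
  have hboundP := abs_le.mp (h₁ t hk)
  have hboundQ := abs_le.mp (h₁ _ hkσ)
  have hboundPQ := abs_le.mp (h₁ _ hkσσ)
  rw [logHeight₁_inv] at hboundQ
  refine ⟨P, Q, ?_, ?_, ?_⟩ <;> rw [abs_le] <;> constructor <;> linarith

theorem rank_at_least_two_twists_general (K : Type*) [Field K] [CharZero K]
    [AdmissibleAbsValues K] [DecidableEq K] [Northcott (logHeight₁ : K → ℝ)] :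
    {t : K | ¬ 2 ≤ Module.rank ℤ (twistCurve t).Point}.Finite := by
  obtain ⟨C, hdouble⟩ := exists_abs_mordellHeight_two_nsmul_sub_le K
  obtain ⟨E, hpoints⟩ := exists_abs_mordellHeight_sub_four_mul_le K
  refine (((Set.toFinite {0, 1, 2}).union finite_setOf_twistParameter_eq_zero).union
    (Northcott.finite_le (h := (logHeight₁ : K → ℝ)) (5 / 4 * (E + C / 3)))).subset fun t ht ↦ ?_
  by_contra hexcept
  simp only [Set.mem_union, Set.mem_insert_iff, Set.mem_singleton_iff, Set.mem_ofPred_eq, not_or,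
    not_le] at hexcept
  obtain ⟨⟨⟨ht₀, ht₁, ht₂⟩, hk⟩, hheight⟩ := hexcept
  obtain ⟨P, Q, hP, hQ, hPQ⟩ := hpoints t hk ht₀ ht₁ ht₂
  obtain ⟨D, hlaw⟩ :=
    exists_abs_mordellHeight_add_add_sub_le (b := -432 * twistParameter t ^ 2) (by simp [hk])
  exact ht (two_le_rank_of_abs_sub_le (hdouble _) hlaw hP hQ hPQ (by linarith))

end TwistFamily

/-- Corollary 1.2: for all but finitely many `t ∈ ℚ`, the curve `X³ + Y³ = k(t)` has
rank at least 2 over `ℚ`. -/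
theorem rank_at_least_two_twists :
    {t : ℚ | ¬ 2 ≤ Module.rank ℤ (W7 t).Point}.Finite :=
  rank_at_least_two_twists_general ℚ
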